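/- arXiv:1906.10331 — 6 statements merged into one kernel-verified Lean document; each statement's English description precedes it below -/
import Mathlib

section
/- Let γ₁, γ₂ ≥ 0, let g: ℝ^d → (-∞, ∞] be proper and γ₁-convex (i.e., x ↦ g(x) − (γ₁/2)‖x‖² is convex), and let h: ℝ^d → ℝ be γ₂-convex (i.e., x ↦ h(x) − (γ₂/2)‖x‖² is convex). Suppose x ∈ dom(g), y ∈ ∂h(x), and x' ∈ ℝ^d satisfies y ∈ ∂g(x'). Then g(x') − h(x') ≤ g(x) − h(x) − ((γ₁ + γ₂)/2)‖x' − x‖². -/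
/-!
A subgradient inequality for a `γ`-convex function improves by the quadratic term `γ/2 ‖a - b‖²`
(`strong_subgradient`): compare the subgradient inequality at `b` with `γ`-convexity along the
segment from `b` to `a`, divide by the parameter `t`, and let `t → 0`. Applying this to `g` at `x'`
and to `h` at `x`, both with the subgradient `y`, and adding the two inequalities makes the inner
products cancel, which is the claim.
-/

open scoped RealInnerProductSpace

/-- The (convex) subdifferential of an extended-real-valued function `φ` at `x̄`. -/
def subdiff {d : ℕ} (φ : EuclideanSpace ℝ (Fin d) → EReal)
    (x' : EuclideanSpace ℝ (Fin d)) : Set (EuclideanSpace ℝ (Fin d)) :=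
  {v | φ x' ≠ ⊤ ∧ ∀ x, ((⟪v, x - x'⟫ : ℝ) : EReal) + φ x' ≤ φ x}

/-- The (convex) subdifferential of a real-valued function `h` at `x̄`. -/
def subdiffR {d : ℕ} (h : EuclideanSpace ℝ (Fin d) → ℝ)
    (x' : EuclideanSpace ℝ (Fin d)) : Set (EuclideanSpace ℝ (Fin d)) :=
  {v | ∀ x, ⟪v, x - x'⟫ ≤ h x - h x'}

/-- Convexity for extended-real-valued functions. -/
def EConvex {d : ℕ} (φ : EuclideanSpace ℝ (Fin d) → EReal) : Prop :=
  ∀ x y : EuclideanSpace ℝ (Fin d), ∀ t : ℝ, 0 ≤ t → t ≤ 1 →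
    φ (t • x + (1 - t) • y) ≤ ((t : ℝ) : EReal) * φ x + (((1 - t : ℝ)) : EReal) * φ y

/-- Strengthened subgradient inequality. Here `A`, `B` are the values at `a`, `b` of a function, and
`r` plays the role of its value at the point `t • a + (1 - t) • b`; only finite values on the segment
enter, so the lemma serves real-valued and extended-real-valued functions alike. -/
lemma strong_subgradient {d : ℕ} (γ A B : ℝ) (a b v : EuclideanSpace ℝ (Fin d))
    (H : ∀ t : ℝ, 0 < t → t < 1 → ∃ r : ℝ,
      ⟪v, (t • a + (1 - t) • b) - b⟫ ≤ r - B ∧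
      r - γ / 2 * ‖t • a + (1 - t) • b‖ ^ 2 ≤
        t * (A - γ / 2 * ‖a‖ ^ 2) + (1 - t) * (B - γ / 2 * ‖b‖ ^ 2)) :
    ⟪v, a - b⟫ + γ / 2 * ‖a - b‖ ^ 2 ≤ A - B := by
  have key : ∀ t : ℝ, 0 < t → t < 1 →
      ⟪v, a - b⟫ + γ / 2 * (1 - t) * ‖a - b‖ ^ 2 ≤ A - B := by
    intro t ht ht1
    obtain ⟨r, h1, h2⟩ := H t ht ht1
    have e : (t • a + (1 - t) • b) - b = t • (a - b) := by module
    rw [e, inner_smul_right] at h1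
    have n1 : ‖t • a + (1 - t) • b‖ ^ 2
        = t * ‖a‖ ^ 2 + (1 - t) * ‖b‖ ^ 2 - t * (1 - t) * ‖a - b‖ ^ 2 := by
      rw [norm_add_sq_real, norm_sub_sq_real, norm_smul, norm_smul, inner_smul_left,
        inner_smul_right, mul_pow, mul_pow, Real.norm_eq_abs, Real.norm_eq_abs, sq_abs, sq_abs]
      simp only [conj_trivial]
      ring
    rw [n1] at h2
    refine le_of_mul_le_mul_left ?_ ht
    linarith
  have hlim : Filter.Tendsto (fun t : ℝ => ⟪v, a - b⟫ + γ / 2 * (1 - t) * ‖a - b‖ ^ 2)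
      (nhdsWithin 0 (Set.Ioi 0)) (nhds (⟪v, a - b⟫ + γ / 2 * ‖a - b‖ ^ 2)) := by
    have hc : Continuous (fun t : ℝ => ⟪v, a - b⟫ + γ / 2 * (1 - t) * ‖a - b‖ ^ 2) := by
      fun_prop
    have := (hc.tendsto 0).mono_left (nhdsWithin_le_nhds (s := Set.Ioi (0 : ℝ)))
    simpa using this
  refine le_of_tendsto hlim ?_
  filter_upwards [Ioo_mem_nhdsGT (zero_lt_one (α := ℝ))] with t ht
  exact key t ht.1 ht.2

/-- For `g` proper and `γ₁`-convex and `h : ℝ^d → ℝ` `γ₂`-convex, if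
`x ∈ dom g`, `y ∈ ∂h(x)` and `y ∈ ∂g(x')`, then
`g(x') - h(x') ≤ g(x) - h(x) - ((γ₁ + γ₂)/2)‖x' - x‖²`. -/
theorem statement5 {d : ℕ} (γ₁ γ₂ : ℝ) (hγ₁ : 0 ≤ γ₁) (hγ₂ : 0 ≤ γ₂)
    (g : EuclideanSpace ℝ (Fin d) → EReal) (h : EuclideanSpace ℝ (Fin d) → ℝ)
    (hbot : ∀ z, g z ≠ ⊥) (hproper : ∃ z, g z ≠ ⊤)
    (hgconv : EConvex (fun z => g z - ((γ₁ / 2 * ‖z‖ ^ 2 : ℝ) : EReal)))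
    (hhconv : ConvexOn ℝ Set.univ (fun z => h z - γ₂ / 2 * ‖z‖ ^ 2))
    (x y x' : EuclideanSpace ℝ (Fin d)) (hx : g x ≠ ⊤)
    (hy : y ∈ subdiffR h x) (hy' : y ∈ subdiff g x') :
    g x' - ((h x' : ℝ) : EReal) ≤
      g x - ((h x : ℝ) : EReal) - (((γ₁ + γ₂) / 2 * ‖x' - x‖ ^ 2 : ℝ) : EReal) := by
  obtain ⟨hx', hsub⟩ := hy'
  obtain ⟨A, hA⟩ : ∃ A : ℝ, g x = A := ⟨_, (EReal.coe_toReal hx (hbot x)).symm⟩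
  obtain ⟨B, hB⟩ : ∃ B : ℝ, g x' = B := ⟨_, (EReal.coe_toReal hx' (hbot x')).symm⟩
  have hg : ⟪y, x - x'⟫ + γ₁ / 2 * ‖x - x'‖ ^ 2 ≤ A - B := by
    refine strong_subgradient γ₁ A B x x' y fun t ht ht1 => ?_
    have hc := hgconv x x' t ht.le ht1.le
    have hs := hsub (t • x + (1 - t) • x')
    simp only [hA, hB] at hc hs
    -- Convexity bounds `g` on the segment by a real number, so `g` is finite there.
    have hz : g (t • x + (1 - t) • x') ≠ ⊤ := by
      intro htop
      rw [htop, EReal.top_sub_coe] at hc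
      exact absurd (top_le_iff.mp hc) (by norm_cast)
    obtain ⟨r, hr⟩ : ∃ r : ℝ, g (t • x + (1 - t) • x') = r :=
      ⟨_, (EReal.coe_toReal hz (hbot _)).symm⟩
    rw [hr] at hc hs
    refine ⟨r, ?_, by exact_mod_cast hc⟩
    have hs' : ⟪y, (t • x + (1 - t) • x') - x'⟫ + B ≤ r := by exact_mod_cast hs
    linarith
  have hh : ⟪y, x' - x⟫ + γ₂ / 2 * ‖x' - x‖ ^ 2 ≤ h x' - h x := by
    refine strong_subgradient γ₂ (h x') (h x) x' x y fun t ht ht1 => ⟨_, hy _, ?_⟩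
    simpa only [smul_eq_mul] using hhconv.2 (Set.mem_univ x') (Set.mem_univ x) ht.le
      (sub_nonneg.mpr ht1.le) (add_sub_cancel t 1)
  have hneg : ⟪y, x - x'⟫ = -⟪y, x' - x⟫ := by rw [← inner_neg_right, neg_sub]
  rw [hneg, norm_sub_rev x x'] at hg
  rw [hA, hB]
  have : B - h x' ≤ A - h x - (γ₁ + γ₂) / 2 * ‖x' - x‖ ^ 2 := by linarith
  exact_mod_cast this
end

section
/- Let g: ℝ^d → (-∞, ∞] be proper, lower semicontinuous, and γ₁-convex, let h: ℝ^d → ℝ be γ₂-convex with γ₁ + γ₂ > 0, and suppose f := g − h is bounded from below on dom(g). Let {x_l} ⊂ dom(g) and {y_l} ⊂ ℝ^d satisfy y_l ∈ ∂h(x_l) and y_l ∈ ∂g(x_{l+1}) for all l ∈ ℕ. If the sequence {x_l} is bounded, then the limit x̄ of any convergent subsequence of {x_l} is a stationary point of f, i.e., ∂g(x̄) ∩ ∂h(x̄) ≠ ∅. -/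
/-!
The proof is the classical energy argument for the DCA. Strong convexity upgrades the two
subgradient inequalities at `x_l` (for `h`) and `x_{l+1}` (for `g`) by quadratic terms
(`subdiffR_quadratic`, `subdiff_quadratic`); testing convexity at midpoints costs a factor two in
the constant, which is harmless. Adding them gives
`f (x_l) - f (x_{l+1}) ≥ (γ₁ + γ₂) / 4 * ‖x_{l+1} - x_l‖ ^ 2`, so `f (x_l)` decreases and, being
bounded below, converges; hence `x_{l+1} - x_l → 0` (`tendsto_sub_of_descent`).

Since `h` is convex and finite, it is continuous, so its subgradients are bounded over bounded sets
(`subdiffR_bounded`) and a further subsequence of `y_{σ l}` converges to some `ybar`. Along it both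
`x_{σ l}` and `x_{σ l + 1}` tend to `x̄`; continuity of `h` and lower semicontinuity of `g`
(`subdiff_of_tendsto`) pass the subgradient inequalities to the limit, so `ybar` lies in both
subdifferentials.
-/

open scoped RealInnerProductSpace

section Auxiliary

variable {d : ℕ}

/-- The midpoint case of the identity
`t‖x‖² + (1-t)‖y‖² - ‖tx + (1-t)y‖² = t(1-t)‖x-y‖²`. -/
lemma norm_sq_midpoint (x y : EuclideanSpace ℝ (Fin d)) :
    ‖(1 / 2 : ℝ) • x + (1 - 1 / 2 : ℝ) • y‖ ^ 2
      = 1 / 2 * ‖x‖ ^ 2 + 1 / 2 * ‖y‖ ^ 2 - 1 / 4 * ‖x - y‖ ^ 2 := by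
  rw [norm_add_sq_real, norm_sub_sq_real, norm_smul, norm_smul, real_inner_smul_left,
    real_inner_smul_right]
  norm_num
  ring

lemma inner_midpoint_sub (v x y : EuclideanSpace ℝ (Fin d)) :
    ⟪v, (1 / 2 : ℝ) • x + (1 - 1 / 2 : ℝ) • y - y⟫ = 1 / 2 * ⟪v, x - y⟫ := by
  rw [← real_inner_smul_right]
  congr 1
  module

/-- Subgradient inequality with quadratic gain for a `γ`-convex real-valued function. -/
lemma subdiffR_quadratic {γ : ℝ} {h : EuclideanSpace ℝ (Fin d) → ℝ}
    (hconv : ConvexOn ℝ Set.univ (fun z => h z - γ / 2 * ‖z‖ ^ 2))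
    {v y : EuclideanSpace ℝ (Fin d)} (hv : v ∈ subdiffR h y) (x : EuclideanSpace ℝ (Fin d)) :
    ⟪v, x - y⟫ + γ / 4 * ‖x - y‖ ^ 2 ≤ h x - h y := by
  have h1 := hconv.2 (Set.mem_univ x) (Set.mem_univ y)
    (show (0 : ℝ) ≤ 1 / 2 by norm_num) (show (0 : ℝ) ≤ 1 - 1 / 2 by norm_num) (by norm_num)
  have h2 := hv ((1 / 2 : ℝ) • x + (1 - 1 / 2 : ℝ) • y)
  rw [inner_midpoint_sub] at h2
  simp only [norm_sq_midpoint, smul_eq_mul] at h1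
  linarith

/-- Subgradient inequality with quadratic gain for a `γ`-convex extended-real-valued function,
between two points of its domain. -/
lemma subdiff_quadratic {γ : ℝ} {g : EuclideanSpace ℝ (Fin d) → EReal}
    (hbot : ∀ z, g z ≠ ⊥)
    (hconv : EConvex (fun z => g z - ((γ / 2 * ‖z‖ ^ 2 : ℝ) : EReal)))
    {v y : EuclideanSpace ℝ (Fin d)} (hv : v ∈ subdiff g y) (x : EuclideanSpace ℝ (Fin d))
    {a b : ℝ} (ha : g x = a) (hb : g y = b) :
    ⟪v, x - y⟫ + γ / 4 * ‖x - y‖ ^ 2 ≤ a - b := by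
  have h1 := hconv x y (1 / 2) (by norm_num) (by norm_num)
  have h2 := hv.2 ((1 / 2 : ℝ) • x + (1 - 1 / 2 : ℝ) • y)
  rw [inner_midpoint_sub] at h2
  simp only [norm_sq_midpoint, ha, hb] at h1 h2
  have h3 := hbot ((1 / 2 : ℝ) • x + (1 - 1 / 2 : ℝ) • y)
  generalize g ((1 / 2 : ℝ) • x + (1 - 1 / 2 : ℝ) • y) = m at h1 h2 h3
  induction m with
  | bot => exact absurd rfl h3
  | top =>
    rw [EReal.top_sub_coe] at h1
    norm_cast at h1
  | coe m =>
    have h1' : m - γ / 2 * (1 / 2 * ‖x‖ ^ 2 + 1 / 2 * ‖y‖ ^ 2 - 1 / 4 * ‖x - y‖ ^ 2)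
        ≤ 1 / 2 * (a - γ / 2 * ‖x‖ ^ 2) + (1 - 1 / 2) * (b - γ / 2 * ‖y‖ ^ 2) := by
      exact_mod_cast h1
    have h2' : 1 / 2 * ⟪v, x - y⟫ + b ≤ m := by exact_mod_cast h2
    linarith

/-- A continuous function has uniformly bounded subgradients over a bounded set of points. -/
lemma subdiffR_bounded {h : EuclideanSpace ℝ (Fin d) → ℝ} (hc : Continuous h) (C : ℝ) :
    ∃ K : ℝ, ∀ x v, ‖x‖ ≤ C → v ∈ subdiffR h x → ‖v‖ ≤ K := by
  obtain ⟨B, hB⟩ := (isCompact_closedBall (0 : EuclideanSpace ℝ (Fin d)) (C + 1))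
    |>.exists_bound_of_continuousOn hc.continuousOn
  refine ⟨2 * B, fun x v hx hv => ?_⟩
  have hx0 := hB x (by simp; linarith)
  have hB0 : 0 ≤ B := (norm_nonneg _).trans hx0
  by_cases hv0 : v = 0
  · simp [hv0, hB0]
  have hn : 0 < ‖v‖ := norm_pos_iff.mpr hv0
  -- Test the subgradient inequality one unit away from `x` in the direction of `v`.
  have hu : ‖‖v‖⁻¹ • v‖ = 1 := by
    rw [norm_smul, norm_inv, norm_norm, inv_mul_cancel₀ hn.ne']
  have h1 := hv (x + ‖v‖⁻¹ • v)
  rw [add_sub_cancel_left, real_inner_smul_right, real_inner_self_eq_norm_sq] at h1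
  have h2 := hB (x + ‖v‖⁻¹ • v) (by
    have := norm_add_le x (‖v‖⁻¹ • v)
    simp only [mem_closedBall_zero_iff]
    linarith)
  have h3 : ‖v‖⁻¹ * ‖v‖ ^ 2 = ‖v‖ := by field_simp
  rw [Real.norm_eq_abs, abs_le] at hx0 h2
  linarith [hx0.1, h2.2]

/-- The step lengths of a sequence tend to zero if their squares are controlled by the decrease of
a function bounded below. -/
lemma tendsto_sub_of_descent {c M : ℝ} (hc : 0 < c) {F : ℕ → ℝ}
    {x : ℕ → EuclideanSpace ℝ (Fin d)} (hM : ∀ l, M ≤ F l)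
    (hF : ∀ l, c * ‖x (l + 1) - x l‖ ^ 2 ≤ F l - F (l + 1)) :
    Filter.Tendsto (fun l => x (l + 1) - x l) Filter.atTop (nhds 0) := by
  have hanti : Antitone F := antitone_nat_of_succ_le fun l => by
    have := hF l
    have : 0 ≤ c * ‖x (l + 1) - x l‖ ^ 2 := by positivity
    linarith
  have hlim := tendsto_atTop_ciInf hanti ⟨M, by rintro _ ⟨l, rfl⟩; exact hM l⟩
  have hdiff : Filter.Tendsto (fun l => (F l - F (l + 1)) / c) Filter.atTop (nhds 0) := by
    have := (hlim.sub (hlim.comp (Filter.tendsto_add_atTop_nat 1))).div_const c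
    simpa using this
  have hsq : Filter.Tendsto (fun l => ‖x (l + 1) - x l‖ ^ 2) Filter.atTop (nhds 0) := by
    refine squeeze_zero (fun l => by positivity) (fun l => ?_) hdiff
    rw [le_div_iff₀ hc, mul_comm]
    exact hF l
  rw [tendsto_zero_iff_norm_tendsto_zero]
  simpa using hsq.sqrt

/-- The graph of the subdifferential of a proper lower semicontinuous function is closed. -/
lemma subdiff_of_tendsto {g : EuclideanSpace ℝ (Fin d) → EReal}
    (hbot : ∀ z, g z ≠ ⊥) (hproper : ∃ z, g z ≠ ⊤) (hlsc : LowerSemicontinuous g)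
    {x y : ℕ → EuclideanSpace ℝ (Fin d)} {x' y' : EuclideanSpace ℝ (Fin d)}
    (hx : Filter.Tendsto x Filter.atTop (nhds x')) (hy : Filter.Tendsto y Filter.atTop (nhds y'))
    (hxy : ∀ l, y l ∈ subdiff g (x l)) : y' ∈ subdiff g x' := by
  have key : ∀ z (a : ℝ), g z = a → g x' ≤ ((a - ⟪y', z - x'⟫ : ℝ) : EReal) := by
    intro z a ha
    by_contra! hlt
    obtain ⟨c, hc1, hc2⟩ := EReal.exists_between_coe_real hlt
    have ht : Filter.Tendsto (fun l => a - ⟪y l, z - x l⟫) Filter.atTop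
        (nhds (a - ⟪y', z - x'⟫)) :=
      tendsto_const_nhds.sub (hy.inner (tendsto_const_nhds.sub hx))
    obtain ⟨l, hl1, hl2⟩ := ((hx.eventually (hlsc x' c hc2)).and
      (ht.eventually_lt_const (EReal.coe_lt_coe_iff.mp hc1))).exists
    have h1 := (hxy l).2 z
    have h2 := (hxy l).1
    have h3 := hbot (x l)
    rw [ha] at h1
    lift g (x l) to ℝ using ⟨h2, h3⟩ with b
    have h1' : ⟪y l, z - x l⟫ + b ≤ a := by exact_mod_cast h1
    have h4 : c < b := by exact_mod_cast hl1
    linarith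
  have hfin : g x' ≠ ⊤ := by
    obtain ⟨z, hz⟩ := hproper
    have h1 := key z _ (EReal.coe_toReal hz (hbot z)).symm
    exact (h1.trans_lt (EReal.coe_lt_top _)).ne
  refine ⟨hfin, fun z => ?_⟩
  by_cases hz : g z = ⊤
  · rw [hz]
    exact le_top
  have h1 := key z _ (EReal.coe_toReal hz (hbot z)).symm
  rw [← EReal.coe_toReal hz (hbot z)]
  have h3 := hbot x'
  lift g x' to ℝ using ⟨hfin, h3⟩ with b
  have h1' : b ≤ (g z).toReal - ⟪y', z - x'⟫ := by exact_mod_cast h1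
  have h2 : ⟪y', z - x'⟫ + b ≤ (g z).toReal := by linarith
  exact_mod_cast h2

end Auxiliary

/-- Convergence of the DCA. If `g` is proper, lsc, `γ₁`-convex, `h` is
`γ₂`-convex with `γ₁ + γ₂ > 0`, `f = g - h` is bounded below on `dom g`, and the DCA
sequences `x_l ⊂ dom g`, `y_l ∈ ∂h(x_l) ∩ ∂g(x_{l+1})` are such that `{x_l}` is bounded,
then the limit of any convergent subsequence of `{x_l}` is a stationary point of `f`,
i.e., `∂g(x̄) ∩ ∂h(x̄) ≠ ∅`. -/
theorem statement6 {d : ℕ} (γ₁ γ₂ : ℝ) (hγ₁ : 0 ≤ γ₁) (hγ₂ : 0 ≤ γ₂)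
    (hγ : 0 < γ₁ + γ₂)
    (g : EuclideanSpace ℝ (Fin d) → EReal) (h : EuclideanSpace ℝ (Fin d) → ℝ)
    (hbot : ∀ z, g z ≠ ⊥) (hproper : ∃ z, g z ≠ ⊤)
    (hlsc : LowerSemicontinuous g)
    (hgconv : EConvex (fun z => g z - ((γ₁ / 2 * ‖z‖ ^ 2 : ℝ) : EReal)))
    (hhconv : ConvexOn ℝ Set.univ (fun z => h z - γ₂ / 2 * ‖z‖ ^ 2))
    (hbdd : ∃ M : ℝ, ∀ z, g z ≠ ⊤ → ((M : ℝ) : EReal) ≤ g z - ((h z : ℝ) : EReal))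
    (xs ys : ℕ → EuclideanSpace ℝ (Fin d))
    (hdom : ∀ l, g (xs l) ≠ ⊤)
    (hys : ∀ l, ys l ∈ subdiffR h (xs l))
    (hygs : ∀ l, ys l ∈ subdiff g (xs (l + 1)))
    (hbound : ∃ C : ℝ, ∀ l, ‖xs l‖ ≤ C)
    (xbar : EuclideanSpace ℝ (Fin d)) (σ : ℕ → ℕ) (hσ : StrictMono σ)
    (hlim : Filter.Tendsto (fun l => xs (σ l)) Filter.atTop (nhds xbar)) :
    (subdiff g xbar ∩ subdiffR h xbar).Nonempty := by
  obtain ⟨M, hM⟩ := hbdd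
  obtain ⟨C, hC⟩ := hbound
  have hcont : Continuous h := by
    have h1 := hhconv.continuousOn isOpen_univ
    rw [continuousOn_univ] at h1
    have h2 : Continuous fun z : EuclideanSpace ℝ (Fin d) => γ₂ / 2 * ‖z‖ ^ 2 := by fun_prop
    exact (h1.add h2).congr fun z => sub_add_cancel (h z) _
  have hG : ∀ l, g (xs l) = ((g (xs l)).toReal : EReal) := fun l =>
    (EReal.coe_toReal (hdom l) (hbot _)).symm
  have hstep : Filter.Tendsto (fun l => xs (l + 1) - xs l) Filter.atTop (nhds 0) := by
    refine tendsto_sub_of_descent (c := (γ₁ + γ₂) / 4) (M := M)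
      (F := fun l => (g (xs l)).toReal - h (xs l)) (by linarith) (fun l => ?_) (fun l => ?_)
    · have h1 := hM _ (hdom l)
      rw [hG l] at h1
      exact_mod_cast h1
    · have h1 := subdiff_quadratic hbot hgconv (hygs l) (xs l) (hG l) (hG (l + 1))
      have h2 := subdiffR_quadratic hhconv (hys l) (xs (l + 1))
      rw [norm_sub_rev, ← neg_sub (xs (l + 1)) (xs l), inner_neg_right] at h1
      linarith
  obtain ⟨K, hK⟩ := subdiffR_bounded hcont C
  obtain ⟨ybar, -, τ, hτ, hy⟩ :=
    (isCompact_closedBall (0 : EuclideanSpace ℝ (Fin d)) K).tendsto_subseq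
      (x := fun l => ys (σ l)) (fun l => by simpa using hK _ _ (hC _) (hys _))
  have hx : Filter.Tendsto (fun l => xs (σ (τ l))) Filter.atTop (nhds xbar) :=
    hlim.comp hτ.tendsto_atTop
  have hx1 : Filter.Tendsto (fun l => xs (σ (τ l) + 1)) Filter.atTop (nhds xbar) := by
    have := (hstep.comp (hσ.comp hτ).tendsto_atTop).add hx
    simpa [Function.comp_def] using this
  refine ⟨ybar, subdiff_of_tendsto hbot hproper hlsc hx1 hy (fun l => hygs _), fun z => ?_⟩
  exact le_of_tendsto_of_tendsto' (hy.inner (tendsto_const_nhds.sub hx))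
    (tendsto_const_nhds.sub ((hcont.tendsto xbar).comp hx)) (fun l => hys (σ (τ l)) z)
end

section
/- Let a ∈ ℝ^d, μ > 0, and let B denote the closed unit ball of ℝ^d. Define f_μ(x) := (1/(2μ))‖x − a‖² − (μ/2)·(dist((x − a)/μ, B))², where dist(z, B) = inf{‖z − w‖ : w ∈ B} is the Euclidean distance from z to B. Then for all x ∈ ℝ^d: f_μ(x) ≤ ‖x − a‖ ≤ f_μ(x) + μ/2. -/
/-!
Put `z = (x - a) / μ`, `t = ‖z‖` and `D = dist(z, B)`. Then `f_μ(x) = (μ / 2) (t² - D²)` and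
`‖x - a‖ = μ t`, so the claim reads `t² - D² ≤ 2 t ≤ t² - D² + 1`. Both inequalities follow from
`D = max (t - 1) 0`: the right one says `D² ≤ (t - 1)²`, and the left one is clear for `t ≤ 1` and
follows from `D² ≥ (t - 1)²` for `t > 1`.
-/

/-- The triangle inequality gives `≥`; for `≤`, the ball contains `z` itself if `‖z‖ ≤ 1`, and the
radial projection `z / ‖z‖` otherwise. -/
lemma infDist_closedBall_zero_one {E : Type*} [NormedAddCommGroup E] [NormedSpace ℝ E] (z : E) :
    Metric.infDist z (Metric.closedBall (0 : E) 1) = max (‖z‖ - 1) 0 := by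
  apply le_antisymm
  · rcases le_or_gt ‖z‖ 1 with h | h
    · rw [Metric.infDist_zero_of_mem (by simpa using h)]
      exact le_max_right _ _
    · have h0 : 0 < ‖z‖ := by linarith
      have hmem : ‖z‖⁻¹ • z ∈ Metric.closedBall (0 : E) 1 := by
        simp [norm_smul, h0.ne']
      refine (Metric.infDist_le_dist_of_mem hmem).trans (le_max_of_le_left (le_of_eq ?_))
      have hz : z - ‖z‖⁻¹ • z = (1 - ‖z‖⁻¹) • z := by rw [sub_smul, one_smul]
      have hnonneg : 0 ≤ 1 - ‖z‖⁻¹ := sub_nonneg.2 (inv_le_one_of_one_le₀ h.le)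
      rw [dist_eq_norm, hz, norm_smul, Real.norm_of_nonneg hnonneg, sub_mul, one_mul,
        inv_mul_cancel₀ h0.ne']
  · refine max_le ?_ Metric.infDist_nonneg
    refine (Metric.le_infDist ⟨0, by simp⟩).2 fun w hw => ?_
    have hw1 : ‖w‖ ≤ 1 := by simpa using hw
    rw [dist_eq_norm]
    linarith [norm_sub_norm_le z w]

/-- Nesterov smoothing of `x ↦ ‖x - a‖`. For `μ > 0` and
`f_μ(x) := (1/(2μ))‖x - a‖² - (μ/2) dist((x - a)/μ, B)²`, where `B` is the closed
unit ball, one has `f_μ(x) ≤ ‖x - a‖ ≤ f_μ(x) + μ/2` for all `x`. -/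
theorem statement7 {d : ℕ} (a : EuclideanSpace ℝ (Fin d)) (μ : ℝ) (hμ : 0 < μ)
    (x : EuclideanSpace ℝ (Fin d)) :
    (1 / (2 * μ)) * ‖x - a‖ ^ 2 -
        (μ / 2) * (Metric.infDist (μ⁻¹ • (x - a))
          (Metric.closedBall (0 : EuclideanSpace ℝ (Fin d)) 1)) ^ 2 ≤ ‖x - a‖ ∧
      ‖x - a‖ ≤ (1 / (2 * μ)) * ‖x - a‖ ^ 2 -
        (μ / 2) * (Metric.infDist (μ⁻¹ • (x - a))
          (Metric.closedBall (0 : EuclideanSpace ℝ (Fin d)) 1)) ^ 2 + μ / 2 := by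
  have hn : ‖x - a‖ = μ * ‖μ⁻¹ • (x - a)‖ := by
    rw [norm_smul, Real.norm_of_nonneg (inv_pos.2 hμ).le, mul_inv_cancel_left₀ hμ.ne']
  rw [infDist_closedBall_zero_one, hn]
  have ht := norm_nonneg (μ⁻¹ • (x - a))
  generalize ‖μ⁻¹ • (x - a)‖ = t at ht ⊢
  have hsq : 1 / (2 * μ) * (μ * t) ^ 2 = μ / 2 * t ^ 2 := by field_simp
  rw [hsq]
  rcases le_total t 1 with h | h
  · rw [max_eq_right (by linarith)]
    constructor
    · nlinarith [mul_nonneg hμ.le (mul_nonneg ht (sub_nonneg.2 h)), mul_nonneg hμ.le ht]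
    · nlinarith [mul_nonneg hμ.le (sq_nonneg (t - 1))]
  · rw [max_eq_left (by linarith)]
    constructor <;> nlinarith
end

section
/- Let a ∈ ℝ^d, μ > 0, and let B denote the closed unit ball of ℝ^d. Define f_μ(x) := (1/(2μ))‖x − a‖² − (μ/2)·(dist((x − a)/μ, B))². Then f_μ is differentiable on ℝ^d and its gradient at every x ∈ ℝ^d equals the Euclidean projection of (x − a)/μ onto B; explicitly, ∇f_μ(x) = (x − a)/μ if ‖x − a‖ ≤ μ, and ∇f_μ(x) = (x − a)/‖x − a‖ if ‖x − a‖ > μ. -/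
/-!
Put `w = (x - a)/μ`, `v = (z - a)/μ` and let `p` be the projection of `w` onto the ball `B`,
characterised by the obtuse-angle inequality `⟪w - p, q - p⟫ ≤ 0` for all `q ∈ B`. The squared
distance to `B` is squeezed between its linearisation at `w` and `‖v - p‖²`
(`sq_infDist_ge`, `sq_infDist_le`), with equality at `v = w`. Inserting both bounds in `f_μ` gives
`0 ≤ f_μ(z) - f_μ(x) - ⟪p, z - x⟫ ≤ ‖z - x‖² / (2μ)`, so `p` is the gradient of `f_μ` at `x`.
-/

section Projection

variable {E : Type*} [NormedAddCommGroup E] [InnerProductSpace ℝ E]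

/-- The squared distance to `K` lies above its linearisation at `w`, whose gradient is
`2 (w - p)` with `p` the projection of `w` onto `K`. -/
lemma sq_infDist_ge {K : Set E} (hK : IsCompact K) {w p : E} (hp : p ∈ K)
    (hvar : ∀ q ∈ K, inner ℝ (w - p) (q - p) ≤ 0) (v : E) :
    ‖w - p‖ ^ 2 + 2 * inner ℝ (w - p) (v - w) ≤ Metric.infDist v K ^ 2 := by
  obtain ⟨q, hq, hqd⟩ := hK.exists_infDist_eq_dist ⟨p, hp⟩ v
  rw [hqd, dist_eq_norm]
  have h1 : v - q = (w - p) + ((v - w) - (q - p)) := by abel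
  have h2 := hvar q hq
  rw [h1, norm_add_sq_real, inner_sub_right (w - p) (v - w)]
  nlinarith [sq_nonneg ‖(v - w) - (q - p)‖]

lemma sq_infDist_le {E : Type*} [NormedAddCommGroup E] {K : Set E} {p : E} (hp : p ∈ K) (v : E) :
    Metric.infDist v K ^ 2 ≤ ‖v - p‖ ^ 2 := by
  have h := Metric.infDist_le_dist_of_mem (x := v) hp
  rw [dist_eq_norm] at h
  exact pow_le_pow_left₀ Metric.infDist_nonneg h 2

/-- The gradient formula for an arbitrary compact set `K` and a point `p ∈ K` satisfying the
obtuse-angle characterisation of the projection of `(x - a)/μ` onto `K`. -/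
lemma hasGradientAt_smoothing [CompleteSpace E] {K : Set E} (hK : IsCompact K) (a : E) {μ : ℝ}
    (hμ : 0 < μ) (x : E) {p : E} (hp : p ∈ K)
    (hvar : ∀ q ∈ K, inner ℝ (μ⁻¹ • (x - a) - p) (q - p) ≤ 0) :
    HasGradientAt
      (fun z : E => (1 / (2 * μ)) * ‖z - a‖ ^ 2 -
        (μ / 2) * (Metric.infDist (μ⁻¹ • (z - a)) K) ^ 2) p x := by
  rw [hasGradientAt_iff_isLittleO]
  refine Asymptotics.IsBigO.trans_isLittleO
    (Asymptotics.IsBigO.of_bound (1 / (2 * μ)) (Filter.Eventually.of_forall fun z => ?_))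
    (Asymptotics.isLittleO_pow_sub_sub x one_lt_two)
  obtain ⟨w, hw⟩ : ∃ w, w = μ⁻¹ • (x - a) := ⟨_, rfl⟩
  obtain ⟨v, hv⟩ : ∃ v, v = μ⁻¹ • (z - a) := ⟨_, rfl⟩
  have hxa : x - a = μ • w := by rw [hw, smul_inv_smul₀ hμ.ne']
  have hza : z - a = μ • v := by rw [hv, smul_inv_smul₀ hμ.ne']
  have hzx : z - x = μ • (v - w) := by rw [smul_sub, ← hxa, ← hza]; abel
  rw [← hw] at hvar
  rw [← hw, ← hv, hxa, hza, hzx]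
  have hge := sq_infDist_ge hK hp hvar v
  have hle := sq_infDist_le hp v
  have hge' := sq_infDist_ge hK hp hvar w
  have hle' := sq_infDist_le hp w
  have hscale (u : E) : 1 / (2 * μ) * ‖μ • u‖ ^ 2 = μ / 2 * ‖u‖ ^ 2 := by
    rw [norm_smul, Real.norm_of_nonneg hμ.le]
    field_simp
  rw [hscale, hscale, inner_smul_right, norm_pow, norm_norm, hscale, Real.norm_eq_abs, abs_le]
  simp only [sub_self, inner_zero_right, norm_sub_sq_real, inner_sub_left, inner_sub_right,
    real_inner_self_eq_norm_sq] at *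
  rw [real_inner_comm p v] at *
  rw [real_inner_comm p w] at *
  rw [real_inner_comm w v] at *
  have hsq : 0 ≤ ‖v‖ ^ 2 - 2 * inner ℝ v w + ‖w‖ ^ 2 := by
    rw [← norm_sub_sq_real]; positivity
  constructor <;> nlinarith

end Projection

/-- The Nesterov smoothing
`f_μ(x) := (1/(2μ))‖x - a‖² - (μ/2) dist((x - a)/μ, B)²` (with `B` the closed unit
ball) is differentiable on `ℝ^d`, and its gradient at `x` is the Euclidean projection
of `(x - a)/μ` onto `B`: it equals `(x - a)/μ` if `‖x - a‖ ≤ μ` and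
`(x - a)/‖x - a‖` if `‖x - a‖ > μ`. -/
theorem statement8 {d : ℕ} (a : EuclideanSpace ℝ (Fin d)) (μ : ℝ) (hμ : 0 < μ)
    (x : EuclideanSpace ℝ (Fin d)) :
    HasGradientAt
      (fun z : EuclideanSpace ℝ (Fin d) =>
        (1 / (2 * μ)) * ‖z - a‖ ^ 2 -
          (μ / 2) * (Metric.infDist (μ⁻¹ • (z - a))
            (Metric.closedBall (0 : EuclideanSpace ℝ (Fin d)) 1)) ^ 2)
      (if ‖x - a‖ ≤ μ then μ⁻¹ • (x - a) else ‖x - a‖⁻¹ • (x - a)) x := by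
  refine hasGradientAt_smoothing (isCompact_closedBall _ _) a hμ x ?_ ?_
  · rw [mem_closedBall_zero_iff]
    split_ifs with h
    · rw [norm_smul, norm_inv, Real.norm_of_nonneg hμ.le, inv_mul_le_iff₀ hμ]
      simpa using h
    · rw [norm_smul, norm_inv, norm_norm]
      exact inv_mul_le_one
  · intro q hq
    rw [mem_closedBall_zero_iff] at hq
    split_ifs with h
    · simp
    · push Not at h
      have hr : 0 < ‖x - a‖ := hμ.trans h
      -- Outside the ball, `w - p` is a nonnegative multiple of `x - a`.
      rw [← sub_smul, real_inner_smul_left, inner_sub_right, real_inner_smul_right,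
        real_inner_self_eq_norm_sq]
      refine mul_nonpos_of_nonneg_of_nonpos (sub_nonneg.2 (inv_anti₀ hμ h.le)) ?_
      have h1 := real_inner_le_norm (x - a) q
      have h2 : ‖x - a‖⁻¹ * ‖x - a‖ ^ 2 = ‖x - a‖ := by field_simp
      rw [h2]
      nlinarith
end

section
/- Let a_1, …, a_n ∈ ℝ^d with n ≥ 1, let k ≥ 1, let μ > 0, set r := √(Σ_{j=1}^n ‖a_j‖²) and ξ := r + max_{1≤j≤n} ‖a_j‖. If ρ ≥ (n/(2μ)) [ (1 + ξ²/n) + √( (1 + ξ²/n)² + (12/n)ξ² ) ], then the function G₁(U, V) := (ρ/2)(Σ_{i=1}^k Σ_{j=1}^n u_{i,j}² + Σ_{i=1}^k ‖v_i‖²) − (1/(2μ)) Σ_{i=1}^k Σ_{j=1}^n u_{i,j}² ‖a_j − v_i‖² is convex on the set Δⁿ × ℬ := {(U, V) : u_{i,j} ∈ [0,1] for all i,j, Σ_{i=1}^k u_{i,j} = 1 for each j = 1,…,n, and ‖v_i‖ ≤ r for each i = 1,…,k}. -/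
open scoped BigOperators

/-!
The function splits as `G₁ = Σ_{i,j} F_j(u_{i,j}, v_i)` with
`F_j(u, v) = (ρ/2)(u² + ‖v‖²/n) - (1/(2μ)) u² ‖a_j - v‖²`, so it suffices to treat one pair `(i, j)`.
There `0 ≤ u ≤ 1` and `‖a_j - v‖ ≤ ξ`, and convexity follows once `F_j` lies above its tangent
at every point of the domain. With `w = a_j - v`, `h = u₁ - u₀` and `g = w₁ - w₀`, the first-order
Taylor remainder of `u² ‖w‖²` is exactly
`h² ‖w₁‖² + u₀² ‖g‖² + 2 u₀ h ⟪w₀ + w₁, g⟫ ≤ ξ² h² + ‖g‖² + 4 ξ |h| ‖g‖` (`remainder_le`),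
while that of `μρ(u² + ‖v‖²/n)` is `μρ(h² + ‖g‖²/n)`. The latter dominates because
`(μρ - ξ²)(μρ/n - 1) ≥ 4 ξ²`, which is the quadratic inequality solved by the bound on `ρ`
(`discriminant_bound`).
-/

/-- The lower bound on `x = μρ` makes the quadratic form
`(x - ξ²) h² - 4 ξ h g + (x/n - 1) g²` positive semidefinite. -/
lemma discriminant_bound {n x ξ : ℝ} (hn : 0 < n)
    (hx : n / 2 * ((1 + ξ ^ 2 / n) + Real.sqrt ((1 + ξ ^ 2 / n) ^ 2 + (12 / n) * ξ ^ 2)) ≤ x) :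
    0 < x - ξ ^ 2 ∧ 4 * ξ ^ 2 ≤ (x - ξ ^ 2) * (x / n - 1) := by
  obtain ⟨y, rfl⟩ : ∃ y, x = n * y := ⟨x / n, by field_simp⟩
  obtain ⟨q, hq⟩ : ∃ q, ξ ^ 2 = n * q := ⟨ξ ^ 2 / n, by field_simp⟩
  have hq0 : 0 ≤ q := by
    have : 0 ≤ n * q := hq ▸ sq_nonneg ξ
    exact nonneg_of_mul_nonneg_right this hn
  have e1 : n * q / n = q := by field_simp
  have e2 : 12 / n * (n * q) = 12 * q := by field_simp
  have e3 : n * y / n = y := by field_simp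
  rw [hq, e1, e2] at hx
  rw [hq, e3]
  set S := Real.sqrt ((1 + q) ^ 2 + 12 * q) with hS
  have hS2 : S ^ 2 = (1 + q) ^ 2 + 12 * q := Real.sq_sqrt (by positivity)
  have hS1 : 1 + q ≤ S := Real.le_sqrt_of_sq_le (by linarith)
  have hy : (1 + q) + S ≤ 2 * y := by
    have : n * ((1 + q) + S) ≤ n * (2 * y) := by linarith
    exact le_of_mul_le_mul_left this hn
  have hyq : 1 ≤ y - q := by linarith
  have hprod : 4 * q ≤ (y - q) * (y - 1) := by nlinarith
  constructor
  · have : 0 < n * (y - q) := mul_pos hn (by linarith)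
    linarith
  · have := mul_le_mul_of_nonneg_left hprod hn.le
    linarith

lemma quadratic_form_nonneg {A C ξ h g : ℝ} (hA : 0 < A) (hAC : 4 * ξ ^ 2 ≤ A * C) :
    4 * ξ * h * g ≤ A * h ^ 2 + C * g ^ 2 := by
  have h1 : 0 ≤ A * (A * h ^ 2 + C * g ^ 2 - 4 * ξ * h * g) := by
    nlinarith [sq_nonneg (A * h - 2 * ξ * g), mul_nonneg (sub_nonneg.2 hAC) (sq_nonneg g)]
  linarith [nonneg_of_mul_nonneg_right h1 hA]

/-- Bound on the first-order Taylor remainder of `(u, w) ↦ u² ‖w‖²` between two points with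
`‖w‖ ≤ ξ`, where `u ∈ [0, 1]` at the base point. -/
lemma remainder_le {E : Type*} [NormedAddCommGroup E] [InnerProductSpace ℝ E]
    {u₀ u₁ ξ : ℝ} {w₀ w₁ : E} (hu₀ : u₀ ∈ Set.Icc (0 : ℝ) 1)
    (hw₀ : ‖w₀‖ ≤ ξ) (hw₁ : ‖w₁‖ ≤ ξ) :
    u₁ ^ 2 * ‖w₁‖ ^ 2 - u₀ ^ 2 * ‖w₀‖ ^ 2
        - (2 * u₀ * ‖w₀‖ ^ 2 * (u₁ - u₀) + 2 * u₀ ^ 2 * inner ℝ w₀ (w₁ - w₀))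
      ≤ ξ ^ 2 * (u₁ - u₀) ^ 2 + ‖w₁ - w₀‖ ^ 2 + 4 * ξ * |u₁ - u₀| * ‖w₁ - w₀‖ := by
  obtain ⟨hu, hu'⟩ := hu₀
  have hξ : 0 ≤ ξ := (norm_nonneg _).trans hw₀
  have key : u₁ ^ 2 * ‖w₁‖ ^ 2 - u₀ ^ 2 * ‖w₀‖ ^ 2
        - (2 * u₀ * ‖w₀‖ ^ 2 * (u₁ - u₀) + 2 * u₀ ^ 2 * inner ℝ w₀ (w₁ - w₀))
      = ‖w₁‖ ^ 2 * (u₁ - u₀) ^ 2 + u₀ ^ 2 * ‖w₁ - w₀‖ ^ 2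
        + 2 * (u₀ * ((u₁ - u₀) * inner ℝ (w₀ + w₁) (w₁ - w₀))) := by
    rw [norm_sub_sq_real, inner_add_left, inner_sub_right, inner_sub_right,
      real_inner_self_eq_norm_sq, real_inner_self_eq_norm_sq, real_inner_comm w₁ w₀]
    ring
  have b1 : ‖w₁‖ ^ 2 * (u₁ - u₀) ^ 2 ≤ ξ ^ 2 * (u₁ - u₀) ^ 2 := by gcongr
  have b2 : u₀ ^ 2 * ‖w₁ - w₀‖ ^ 2 ≤ 1 * ‖w₁ - w₀‖ ^ 2 := by
    gcongr
    exact pow_le_one₀ hu hu'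
  have b3 : u₀ * ((u₁ - u₀) * inner ℝ (w₀ + w₁) (w₁ - w₀))
      ≤ 2 * ξ * |u₁ - u₀| * ‖w₁ - w₀‖ := by
    calc u₀ * ((u₁ - u₀) * inner ℝ (w₀ + w₁) (w₁ - w₀))
        ≤ |u₀ * ((u₁ - u₀) * inner ℝ (w₀ + w₁) (w₁ - w₀))| := le_abs_self _
      _ = u₀ * (|u₁ - u₀| * |inner ℝ (w₀ + w₁) (w₁ - w₀)|) := by
        rw [abs_mul, abs_mul, abs_of_nonneg hu]
      _ ≤ 1 * (|u₁ - u₀| * ((2 * ξ) * ‖w₁ - w₀‖)) := by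
        gcongr
        refine (abs_real_inner_le_norm _ _).trans ?_
        gcongr
        linarith [norm_add_le w₀ w₁]
      _ = 2 * ξ * |u₁ - u₀| * ‖w₁ - w₀‖ := by ring
  rw [key]
  linarith

/-- Tangent inequality for `(u, v) ↦ x (u² + ‖v‖² / n) - u² ‖b - v‖²`, where `x = μρ`. -/
lemma tangent_le {E : Type*} [NormedAddCommGroup E] [InnerProductSpace ℝ E]
    {n x u₀ u₁ ξ : ℝ} {b v₀ v₁ : E} (hu₀ : u₀ ∈ Set.Icc (0 : ℝ) 1)
    (hv₀ : ‖b - v₀‖ ≤ ξ) (hv₁ : ‖b - v₁‖ ≤ ξ)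
    (hA : 0 < x - ξ ^ 2) (hAC : 4 * ξ ^ 2 ≤ (x - ξ ^ 2) * (x / n - 1)) :
    x * (u₀ ^ 2 + ‖v₀‖ ^ 2 / n) - u₀ ^ 2 * ‖b - v₀‖ ^ 2
        + ((2 * x * u₀ - 2 * u₀ * ‖b - v₀‖ ^ 2) * (u₁ - u₀)
          + inner ℝ ((2 * x / n) • v₀ + (2 * u₀ ^ 2) • (b - v₀)) (v₁ - v₀))
      ≤ x * (u₁ ^ 2 + ‖v₁‖ ^ 2 / n) - u₁ ^ 2 * ‖b - v₁‖ ^ 2 := by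
  have h1 := remainder_le (u₁ := u₁) hu₀ hv₀ hv₁
  have h2 := quadratic_form_nonneg (h := |u₁ - u₀|) (g := ‖v₁ - v₀‖) hA hAC
  have e : (b - v₁) - (b - v₀) = -(v₁ - v₀) := by abel
  rw [e, norm_neg, inner_neg_right] at h1
  rw [sq_abs] at h2
  have h3 : ‖v₁‖ ^ 2 = ‖v₀‖ ^ 2 + 2 * inner ℝ v₀ (v₁ - v₀) + ‖v₁ - v₀‖ ^ 2 := by
    rw [← norm_add_sq_real, add_sub_cancel]
  rw [inner_add_left, real_inner_smul_left, real_inner_smul_left, h3]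
  have e4 : x * (u₁ ^ 2 + (‖v₀‖ ^ 2 + 2 * inner ℝ v₀ (v₁ - v₀) + ‖v₁ - v₀‖ ^ 2) / n)
      = x * (u₀ ^ 2 + ‖v₀‖ ^ 2 / n) + 2 * x * u₀ * (u₁ - u₀) + x * (u₁ - u₀) ^ 2
        + 2 * x / n * inner ℝ v₀ (v₁ - v₀) + x / n * ‖v₁ - v₀‖ ^ 2 := by ring
  rw [e4]
  linarith

/-- Convexity inequality for a single pair `(i, j)`. -/
lemma pair_convex {E : Type*} [NormedAddCommGroup E] [InnerProductSpace ℝ E]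
    {n x u₁ u₂ ξ s t : ℝ} {b v₁ v₂ : E}
    (hu₁ : u₁ ∈ Set.Icc (0 : ℝ) 1) (hu₂ : u₂ ∈ Set.Icc (0 : ℝ) 1)
    (hv₁ : ‖b - v₁‖ ≤ ξ) (hv₂ : ‖b - v₂‖ ≤ ξ)
    (hA : 0 < x - ξ ^ 2) (hAC : 4 * ξ ^ 2 ≤ (x - ξ ^ 2) * (x / n - 1))
    (hs : 0 ≤ s) (ht : 0 ≤ t) (hst : s + t = 1) :
    x * ((s * u₁ + t * u₂) ^ 2 + ‖s • v₁ + t • v₂‖ ^ 2 / n)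
        - (s * u₁ + t * u₂) ^ 2 * ‖b - (s • v₁ + t • v₂)‖ ^ 2
      ≤ s * (x * (u₁ ^ 2 + ‖v₁‖ ^ 2 / n) - u₁ ^ 2 * ‖b - v₁‖ ^ 2)
        + t * (x * (u₂ ^ 2 + ‖v₂‖ ^ 2 / n) - u₂ ^ 2 * ‖b - v₂‖ ^ 2) := by
  have hu₀ : s * u₁ + t * u₂ ∈ Set.Icc (0 : ℝ) 1 :=
    convex_Icc (0 : ℝ) 1 hu₁ hu₂ hs ht hst
  have hv₀ : ‖b - (s • v₁ + t • v₂)‖ ≤ ξ := by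
    have := convex_closedBall b ξ (mem_closedBall_iff_norm'.2 hv₁)
      (mem_closedBall_iff_norm'.2 hv₂) hs ht hst
    exact mem_closedBall_iff_norm'.1 this
  have h1 := mul_le_mul_of_nonneg_left (tangent_le (u₁ := u₁) hu₀ hv₀ hv₁ hA hAC) hs
  have h2 := mul_le_mul_of_nonneg_left (tangent_le (u₁ := u₂) hu₀ hv₀ hv₂ hA hAC) ht
  obtain rfl : t = 1 - s := by linarith
  have e1 : v₁ - (s • v₁ + (1 - s) • v₂) = (1 - s) • (v₁ - v₂) := by module
  have e2 : v₂ - (s • v₁ + (1 - s) • v₂) = (-s) • (v₁ - v₂) := by module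
  rw [e1, real_inner_smul_right] at h1
  rw [e2, real_inner_smul_right] at h2
  -- The linear parts of the two tangent inequalities, weighted by `s` and `t`, cancel.
  linarith

/-- Convexity of
`G₁(U, V) = (ρ/2)(Σ_{i,j} u_{i,j}² + Σ_i ‖v_i‖²) - (1/(2μ)) Σ_{i,j} u_{i,j}² ‖a_j - v_i‖²`
on `Δⁿ × ℬ` provided `ρ ≥ (n/(2μ))[(1 + ξ²/n) + √((1 + ξ²/n)² + (12/n)ξ²)]`, where
`r = √(Σ_j ‖a_j‖²)` and `ξ = r + max_j ‖a_j‖`. -/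
theorem statement12 {d n k : ℕ} (hn : 1 ≤ n) (hk : 1 ≤ k)
    (a : Fin n → EuclideanSpace ℝ (Fin d)) (μ : ℝ) (hμ : 0 < μ)
    (r ξ ρ : ℝ)
    (hr : r = Real.sqrt (∑ j, ‖a j‖ ^ 2))
    (hξ : ξ = r + ⨆ j, ‖a j‖)
    (hρ : ((n : ℝ) / (2 * μ)) *
        ((1 + ξ ^ 2 / n) + Real.sqrt ((1 + ξ ^ 2 / n) ^ 2 + (12 / n) * ξ ^ 2)) ≤ ρ) :
    ConvexOn ℝ
      {p : (Fin k → Fin n → ℝ) × (Fin k → EuclideanSpace ℝ (Fin d)) |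
        (∀ i j, p.1 i j ∈ Set.Icc (0 : ℝ) 1) ∧ (∀ j, ∑ i, p.1 i j = 1) ∧
          ∀ i, ‖p.2 i‖ ≤ r}
      (fun p =>
        (ρ / 2) * ((∑ i, ∑ j, (p.1 i j) ^ 2) + ∑ i, ‖p.2 i‖ ^ 2) -
          (1 / (2 * μ)) * ∑ i, ∑ j, (p.1 i j) ^ 2 * ‖a j - p.2 i‖ ^ 2) := by
  have hn0 : (0 : ℝ) < n := by exact_mod_cast hn
  have hx : (n : ℝ) / 2 *
      ((1 + ξ ^ 2 / n) + Real.sqrt ((1 + ξ ^ 2 / n) ^ 2 + (12 / n) * ξ ^ 2)) ≤ μ * ρ := by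
    refine le_trans (le_of_eq ?_) (mul_le_mul_of_nonneg_left hρ hμ.le)
    field_simp
  obtain ⟨hA, hAC⟩ := discriminant_bound hn0 hx
  have hball : ∀ (j : Fin n) (v : EuclideanSpace ℝ (Fin d)), ‖v‖ ≤ r → ‖a j - v‖ ≤ ξ := by
    intro j v hv
    have h1 : ‖a j‖ ≤ ⨆ j, ‖a j‖ := le_ciSup (f := fun j => ‖a j‖) (Set.finite_range _).bddAbove j
    linarith [norm_sub_le (a j) v]
  -- Spreading `‖v_i‖²` evenly over the `n` indices `j` turns `G₁` into a sum over pairs.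
  have hsplit : ∀ p : (Fin k → Fin n → ℝ) × (Fin k → EuclideanSpace ℝ (Fin d)),
      (ρ / 2) * ((∑ i, ∑ j, (p.1 i j) ^ 2) + ∑ i, ‖p.2 i‖ ^ 2) -
          (1 / (2 * μ)) * ∑ i, ∑ j, (p.1 i j) ^ 2 * ‖a j - p.2 i‖ ^ 2
        = 1 / (2 * μ) * ∑ i, ∑ j, (μ * ρ * ((p.1 i j) ^ 2 + ‖p.2 i‖ ^ 2 / n)
            - (p.1 i j) ^ 2 * ‖a j - p.2 i‖ ^ 2) := by
    intro p
    have h1 : ∀ i, ∑ _j : Fin n, ‖p.2 i‖ ^ 2 / (n : ℝ) = ‖p.2 i‖ ^ 2 := by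
      intro i
      rw [Finset.sum_const, Finset.card_univ, Fintype.card_fin, nsmul_eq_mul]
      field_simp
    simp only [Finset.sum_sub_distrib, ← Finset.mul_sum, Finset.sum_add_distrib, h1]
    field_simp
  refine ⟨?_, ?_⟩
  · rintro p ⟨hp1, hp2, hp3⟩ q ⟨hq1, hq2, hq3⟩ s t hs ht hst
    refine ⟨fun i j => convex_Icc (0 : ℝ) 1 (hp1 i j) (hq1 i j) hs ht hst, fun j => ?_, fun i => ?_⟩
    · simp [Finset.sum_add_distrib, ← Finset.mul_sum, hp2, hq2, hst]
    · have := convex_closedBall (0 : EuclideanSpace ℝ (Fin d)) r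
        (mem_closedBall_zero_iff.2 (hp3 i)) (mem_closedBall_zero_iff.2 (hq3 i)) hs ht hst
      exact mem_closedBall_zero_iff.1 this
  · rintro p ⟨hp1, -, hp3⟩ q ⟨hq1, -, hq3⟩ s t hs ht hst
    simp only [hsplit, smul_eq_mul]
    rw [mul_left_comm s, mul_left_comm t, ← mul_add]
    refine mul_le_mul_of_nonneg_left ?_ (by positivity)
    simp only [Finset.mul_sum, ← Finset.sum_add_distrib]
    refine Finset.sum_le_sum fun i _ => Finset.sum_le_sum fun j _ => ?_
    exact pair_convex (hp1 i j) (hq1 i j) (hball j _ (hp3 i)) (hball j _ (hq3 i)) hA hAC hs ht hst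
end

section
/- Let a ∈ ℝ^d, μ > 0, r > 0, n ≥ 1, set ξ := r + ‖a‖, and let ρ > 0 satisfy ρ²/n − (ρ/μ)(1 + ξ²/n) − (3/μ²)ξ² ≥ 0. Then the function γ(u, v) := (ρ/2)u² + (ρ/(2n))‖a − v‖² − (1/(2μ))u²‖a − v‖² is convex on the set [0,1] × {v ∈ ℝ^d : ‖v‖ ≤ r} ⊂ ℝ × ℝ^d. -/
/-! Put `x = a - v`. At `(u, x)` the Hessian of `γ` in a direction `(δ, w)` is
`ρδ² + (ρ/n)‖w‖² - (1/μ)(u²‖w‖² + 4uδ⟪x, w⟫ + δ²‖x‖²)`. For `0 ≤ u ≤ 1`, `‖x‖ ≤ ξ` it dominates the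
binary quadratic form `(ρ - ξ²/μ)δ² - (4ξ/μ)|δ|‖w‖ + (ρ/n - 1/μ)‖w‖²`, whose discriminant condition
is exactly the hypothesis on `ρ`; this is `hessian_nonneg`.

Convexity follows without differentiation. On a segment with weights `s + t = 1` the convexity gap
is `st/2` times the average of the Hessian against a triangular density. The Hessian is quadratic
along the segment, so this average is computed exactly by two equally weighted nodes having the
mean `(t - s)/3` and the variance `(1 - st)/18` of that density (measured from the point with
weights `s, t`), and both nodes lie in the segment. -/

open scoped RealInnerProductSpace

/-- A binary quadratic form with `A > 0` and discriminant condition `B² ≤ AC` is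
nonnegative. -/
lemma binary_form_nonneg {A B C : ℝ} (hA : 0 < A) (h : B ^ 2 ≤ A * C) (x y : ℝ) :
    0 ≤ A * x ^ 2 - 2 * B * x * y + C * y ^ 2 := by
  have h1 : 0 ≤ A * (A * x ^ 2 - 2 * B * x * y + C * y ^ 2) := by
    nlinarith [sq_nonneg (A * x - B * y), mul_nonneg (sub_nonneg.2 h) (sq_nonneg y)]
  exact nonneg_of_mul_nonneg_right h1 hA

/-- The Hessian of `γ` is positive semidefinite; here `k = 1/μ` and `N = 1/n`. -/
lemma hessian_nonneg {E : Type*} [NormedAddCommGroup E] [InnerProductSpace ℝ E]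
    {k N ξ ρ : ℝ} (hk : 0 < k) (hN : 0 < N) (hρ : 0 < ρ)
    (h : 0 ≤ ρ ^ 2 * N - ρ * k * (1 + ξ ^ 2 * N) - 3 * k ^ 2 * ξ ^ 2)
    {u : ℝ} (hu0 : 0 ≤ u) (hu1 : u ≤ 1) {x : E} (hx : ‖x‖ ≤ ξ) (δ : ℝ) (w : E) :
    0 ≤ ρ * δ ^ 2 + ρ * N * ‖w‖ ^ 2
      - k * (u ^ 2 * ‖w‖ ^ 2 + 4 * u * δ * ⟪x, w⟫ + δ ^ 2 * ‖x‖ ^ 2) := by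
  -- The hypothesis forces `ρN ≥ k(1 + ξ²N)`, so the leading coefficient is positive.
  have h1 : 0 ≤ ρ * N - k * (1 + ξ ^ 2 * N) := by
    refine nonneg_of_mul_nonneg_right (?_ : 0 ≤ ρ * _) hρ
    nlinarith [mul_nonneg (sq_nonneg k) (sq_nonneg ξ)]
  have hA : 0 < ρ - k * ξ ^ 2 := by
    refine pos_of_mul_pos_right (?_ : 0 < N * _) hN.le
    nlinarith
  have hq := binary_form_nonneg (A := ρ - k * ξ ^ 2) (B := 2 * k * ξ) (C := ρ * N - k) hA
    (by nlinarith) |δ| ‖w‖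
  rw [sq_abs] at hq
  have hin : u * δ * ⟪x, w⟫ ≤ ξ * |δ| * ‖w‖ := by
    calc u * δ * ⟪x, w⟫ ≤ |u * δ * ⟪x, w⟫| := le_abs_self _
      _ = u * (|δ| * |⟪x, w⟫|) := by rw [abs_mul, abs_mul, abs_of_nonneg hu0, mul_assoc]
      _ ≤ 1 * (|δ| * (ξ * ‖w‖)) := by
        gcongr
        exact (abs_real_inner_le_norm x w).trans (by gcongr)
      _ = ξ * |δ| * ‖w‖ := by ring
  have hu2 : u ^ 2 * ‖w‖ ^ 2 ≤ 1 * ‖w‖ ^ 2 := by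
    gcongr
    exact pow_le_one₀ hu0 hu1
  have hx2 : δ ^ 2 * ‖x‖ ^ 2 ≤ δ ^ 2 * ξ ^ 2 := by gcongr
  have := mul_le_mul_of_nonneg_left (add_le_add (add_le_add hu2 hx2)
    (mul_le_mul_of_nonneg_left hin (by norm_num : (0 : ℝ) ≤ 4))) hk.le
  nlinarith

/-- For `a ∈ ℝ^d`, `μ > 0`, `r > 0`, `n ≥ 1`, `ξ = r + ‖a‖`, and `ρ > 0`
with `ρ²/n - (ρ/μ)(1 + ξ²/n) - (3/μ²)ξ² ≥ 0`, the function
`γ(u, v) = (ρ/2)u² + (ρ/(2n))‖a - v‖² - (1/(2μ))u²‖a - v‖²`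
is convex on `[0,1] × {v : ‖v‖ ≤ r}`. -/
theorem statement13 {d : ℕ} (a : EuclideanSpace ℝ (Fin d)) (μ r : ℝ)
    (hμ : 0 < μ) (hr : 0 < r) (n : ℕ) (hn : 1 ≤ n) (ξ ρ : ℝ)
    (hξ : ξ = r + ‖a‖) (hρpos : 0 < ρ)
    (hρ : 0 ≤ ρ ^ 2 / n - (ρ / μ) * (1 + ξ ^ 2 / n) - (3 / μ ^ 2) * ξ ^ 2) :
    ConvexOn ℝ
      (Set.Icc (0 : ℝ) 1 ×ˢ Metric.closedBall (0 : EuclideanSpace ℝ (Fin d)) r)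
      (fun p : ℝ × EuclideanSpace ℝ (Fin d) =>
        (ρ / 2) * p.1 ^ 2 + (ρ / (2 * n)) * ‖a - p.2‖ ^ 2 -
          (1 / (2 * μ)) * p.1 ^ 2 * ‖a - p.2‖ ^ 2) := by
  have hn0 : (0 : ℝ) < n := by exact_mod_cast hn
  have hk : 0 < μ⁻¹ := inv_pos.2 hμ
  have hN : 0 < (n : ℝ)⁻¹ := inv_pos.2 hn0
  have hρ' : 0 ≤ ρ ^ 2 * (n : ℝ)⁻¹ - ρ * μ⁻¹ * (1 + ξ ^ 2 * (n : ℝ)⁻¹)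
      - 3 * μ⁻¹ ^ 2 * ξ ^ 2 := by
    convert hρ using 1
    simp only [div_eq_mul_inv, inv_pow]
  have hball : ∀ v ∈ Metric.closedBall (0 : EuclideanSpace ℝ (Fin d)) r, ‖a - v‖ ≤ ξ := by
    intro v hv
    have := norm_sub_le a v
    rw [mem_closedBall_zero_iff] at hv
    linarith
  refine ⟨(convex_Icc _ _).prod (convex_closedBall _ _), ?_⟩
  rintro ⟨u₁, v₁⟩ ⟨hu₁, hv₁⟩ ⟨u₂, v₂⟩ ⟨hu₂, hv₂⟩ s t hs ht hst
  have hx₁ := hball v₁ hv₁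
  have hx₂ := hball v₂ hv₂
  obtain ⟨hu₁0, hu₁1⟩ := hu₁
  obtain ⟨hu₂0, hu₂1⟩ := hu₂
  simp only [Prod.smul_mk, Prod.mk_add_mk, smul_eq_mul] at *
  have hcomb : a - (s • v₁ + t • v₂) = s • (a - v₁) + t • (a - v₂) := by
    have : a = s • a + t • a := by rw [← add_smul, hst, one_smul]
    nth_rewrite 1 [this]
    module
  rw [hcomb]
  generalize a - v₁ = x at *
  generalize a - v₂ = y at *
  -- The Hessian at any point of the segment, in the direction of the segment.
  have hH : ∀ α β : ℝ, 0 ≤ α → 0 ≤ β → α + β = 1 → _ := fun α β hα hβ hαβ =>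
    hessian_nonneg hk hN hρpos hρ' (u := α * u₁ + β * u₂) (x := α • x + β • y)
      (by positivity) (by nlinarith)
      (by
        calc ‖α • x + β • y‖ ≤ ‖α • x‖ + ‖β • y‖ := norm_add_le _ _
          _ = α * ‖x‖ + β * ‖y‖ := by
            rw [norm_smul, norm_smul, Real.norm_of_nonneg hα, Real.norm_of_nonneg hβ]
          _ ≤ α * ξ + β * ξ := by gcongr
          _ = ξ := by rw [← add_mul, hαβ, one_mul])
      (u₁ - u₂) (x - y)
  have hsq : ∀ α β : ℝ, ‖α • x + β • y‖ ^ 2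
      = α ^ 2 * ‖x‖ ^ 2 + 2 * α * β * ⟪x, y⟫ + β ^ 2 * ‖y‖ ^ 2 := by
    intro α β
    rw [norm_add_sq_real, norm_smul, norm_smul, mul_pow, mul_pow, real_inner_smul_left,
      real_inner_smul_right, Real.norm_eq_abs, Real.norm_eq_abs, sq_abs, sq_abs]
    ring
  have hinner : ∀ α β : ℝ, ⟪α • x + β • y, x - y⟫
      = α * ‖x‖ ^ 2 + (β - α) * ⟪x, y⟫ - β * ‖y‖ ^ 2 := by
    intro α β
    rw [inner_sub_right, inner_add_left, inner_add_left, real_inner_smul_left,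
      real_inner_smul_left, real_inner_smul_left, real_inner_smul_left,
      real_inner_self_eq_norm_sq, real_inner_self_eq_norm_sq, real_inner_comm x y]
    ring
  obtain rfl : t = 1 - s := by linarith
  have hst0 : 0 ≤ s * (1 - s) := mul_nonneg hs ht
  have hvar : 0 ≤ (1 - s * (1 - s)) / 18 := by nlinarith
  obtain ⟨σ, hσ0, hσ⟩ : ∃ σ : ℝ, 0 ≤ σ ∧ σ ^ 2 = (1 - s * (1 - s)) / 18 :=
    ⟨_, Real.sqrt_nonneg _, Real.sq_sqrt hvar⟩
  have hσ1 : σ ≤ 1 / 3 := by nlinarith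
  -- The weights of the nodes are `s + c, t - c` with `c = (t - s)/3 ± σ` and `t = 1 - s`.
  have hp := hH ((1 + s) / 3 + σ) ((2 - s) / 3 - σ) (by linarith) (by linarith) (by ring)
  have hm := hH ((1 + s) / 3 - σ) ((2 - s) / 3 + σ) (by linarith) (by linarith) (by ring)
  rw [hsq, hinner, norm_sub_sq_real] at hp hm
  rw [hsq]
  have key := mul_nonneg hst0 (add_nonneg hp hm)
  rw [show ρ / (2 * (n : ℝ)) = ρ * (n : ℝ)⁻¹ / 2 by field_simp,
    show 1 / (2 * μ) = μ⁻¹ / 2 by field_simp]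
  generalize (n : ℝ)⁻¹ = N at *
  generalize μ⁻¹ = k at *
  generalize ‖x‖ ^ 2 = P at *
  generalize ‖y‖ ^ 2 = S at *
  generalize ⟪x, y⟫ = R at *
  rw [← sub_nonneg]
  refine le_of_le_of_eq (div_nonneg key (by norm_num : (0 : ℝ) ≤ 4)) ?_
  -- A polynomial identity modulo the defining relation `hσ` of `σ²`.
  linear_combination (-(3 : ℝ) * k * s * (1 - s) * (u₁ - u₂) ^ 2 * (P - 2 * R + S)) * hσ
end
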